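/- arXiv:0904.0535 — 2 statements merged into one kernel-verified Lean document; each statement's English description precedes it below -/
import Mathlib

section
/- Let g be a pseudo-Riemannian metric and L a nondegenerate g-self-adjoint (1,1)-tensor on M^n such that in local coordinates (x¹,…,x^r, y^{r+1},…,y^n) both have block-diagonal form g = diag(g1(x,y), g2(x,y)) and L = diag(L1(x), L2(y)). Then the compatibility equation ∇_u L = (1/2)(u⊗l + (u⊗l)^*) holds for all vectors u tangent to the x-coordinate distribution D1 if and only if the following three conditions hold: (1) for each fixed y, the metric g1(·,y) and the tensor L1 are compatible on the leaf {y = const}; (2) for all indices α, j, k: (g1^{-1} ∂_{y^β} g1)^j_k (L2)^β_α − (L1)^j_m (g1^{-1} ∂_{y^α} g1)^m_k = δ^j_k · ∂_{y^α}(tr L2) (summation over β and m); (3) for every k = 1,…,r: (g2^{-1} ∂_{x^k} g2)·L2 − L2·(g2^{-1} ∂_{x^k} g2) = 0. -/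
open Matrix Polynomial Filter

noncomputable section

variable {ι : Type} [Fintype ι] [DecidableEq ι]

/-- Partial derivative of a real-valued function on `ι → ℝ` in the direction of the
`j`-th coordinate vector. -/
def pd (j : ι) (F : (ι → ℝ) → ℝ) (x : ι → ℝ) : ℝ :=
  fderiv ℝ F x (Pi.single j 1)

/-- Christoffel symbols `Γ^i_{jk}` of a metric given in local coordinates as a
matrix-valued function. -/
def christoffel (g : (ι → ℝ) → Matrix ι ι ℝ) (x : ι → ℝ) (i j k : ι) : ℝ :=
  (1 / 2) * ∑ m, (g x)⁻¹ i m *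
    (pd j (fun y => g y m k) x + pd k (fun y => g y m j) x - pd m (fun y => g y j k) x)

/-- A curve is a geodesic of `g` up to reparametrisation (an unparametrized geodesic):
`γ̈ + Γ(γ̇,γ̇) = α(t)·γ̇` for some function `α`. -/
def IsPregeodesic (g : (ι → ℝ) → Matrix ι ι ℝ) (γ : ℝ → ι → ℝ) : Prop :=
  ∃ α : ℝ → ℝ, ∀ t : ℝ, ∀ i : ι,
    deriv (fun s => deriv (fun τ => γ τ i) s) t
      + ∑ j, ∑ k, christoffel g (γ t) i j k *
          deriv (fun τ => γ τ j) t * deriv (fun τ => γ τ k) t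
      = α t * deriv (fun τ => γ τ i) t

/-- `g` is a pseudo-Riemannian metric (in local coordinates) on the set `U`. -/
structure IsMetricOn (g : (ι → ℝ) → Matrix ι ι ℝ) (U : Set (ι → ℝ)) : Prop where
  smooth : ∀ i j, ContDiffOn ℝ (⊤ : ℕ∞) (fun x => g x i j) U
  symm : ∀ x ∈ U, (g x)ᵀ = g x
  nondeg : ∀ x ∈ U, IsUnit (g x).det

/-- Two metrics are geodesically equivalent on `U`: they have the same geodesics
considered as unparametrized curves. -/
def GeodEquiv (g gb : (ι → ℝ) → Matrix ι ι ℝ) (U : Set (ι → ℝ)) : Prop :=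
  ∀ γ : ℝ → ι → ℝ, ContDiff ℝ (⊤ : ℕ∞) γ → (∀ t, γ t ∈ U) →
    (IsPregeodesic g γ ↔ IsPregeodesic gb γ)

/-- The (1,1)-tensor `L(g,ḡ)^i_j = (det ḡ / det g)^{1/(n+1)} ḡ^{ik} g_{kj}`. -/
def Lten (g gb : (ι → ℝ) → Matrix ι ι ℝ) (x : ι → ℝ) : Matrix ι ι ℝ :=
  (((gb x).det / (g x).det) ^ ((1 : ℝ) / (Fintype.card ι + 1))) • ((gb x)⁻¹ * g x)

/-- An admissible factorisation `χ = χ₁·χ₂` of the characteristic polynomial of `L`: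
both factors are monic of degree ≥ 1, have smooth coefficients, and have no common
complex root at any point of `U`. -/
structure AdmissibleFact (L : (ι → ℝ) → Matrix ι ι ℝ) (U : Set (ι → ℝ))
    (chi1 chi2 : (ι → ℝ) → Polynomial ℝ) : Prop where
  factor : ∀ x ∈ U, (L x).charpoly = chi1 x * chi2 x
  monic1 : ∀ x ∈ U, (chi1 x).Monic
  monic2 : ∀ x ∈ U, (chi2 x).Monic
  deg1 : ∀ x ∈ U, 1 ≤ (chi1 x).natDegree
  deg2 : ∀ x ∈ U, 1 ≤ (chi2 x).natDegree
  smooth1 : ∀ k, ContDiffOn ℝ (⊤ : ℕ∞) (fun x => (chi1 x).coeff k) U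
  smooth2 : ∀ k, ContDiffOn ℝ (⊤ : ℕ∞) (fun x => (chi2 x).coeff k) U
  coprime : ∀ x ∈ U, ¬ ∃ z : ℂ, aeval z (chi1 x) = 0 ∧ aeval z (chi2 x) = 0

/-- The distribution `D = ker χ(L)`. -/
def Dker (L : (ι → ℝ) → Matrix ι ι ℝ) (chi : (ι → ℝ) → Polynomial ℝ) (x : ι → ℝ) :
    Submodule ℝ (ι → ℝ) :=
  LinearMap.ker (Matrix.mulVecLin (aeval (L x) (chi x)))

/-- A distribution on `U` is integrable (involutive, which is equivalent by the
Frobenius theorem): the Lie bracket of any two smooth vector fields tangent to the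
distribution is again tangent to it. -/
def IsIntegrableDist (U : Set (ι → ℝ)) (D : (ι → ℝ) → Submodule ℝ (ι → ℝ)) : Prop :=
  ∀ u v : (ι → ℝ) → ι → ℝ, ContDiffOn ℝ (⊤ : ℕ∞) u U → ContDiffOn ℝ (⊤ : ℕ∞) v U →
    (∀ x ∈ U, u x ∈ D x) → (∀ x ∈ U, v x ∈ D x) →
    ∀ x ∈ U, (fderiv ℝ v x (u x) - fderiv ℝ u x (v x)) ∈ D x

/-- The Lie derivative of the Christoffel symbols of `g` along a vector field `v`:
`(𝓛_v Γ)^i_{jk} = v^m ∂_m Γ^i_{jk} − (∂_m v^i) Γ^m_{jk} + (∂_j v^m) Γ^i_{mk}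
  + (∂_k v^m) Γ^i_{jm} + ∂_j ∂_k v^i`. -/
def lieDerivGamma (g : (ι → ℝ) → Matrix ι ι ℝ) (v : (ι → ℝ) → ι → ℝ)
    (x : ι → ℝ) (i j k : ι) : ℝ :=
  (∑ m, v x m * pd m (fun y => christoffel g y i j k) x)
  - (∑ m, pd m (fun y => v y i) x * christoffel g x m j k)
  + (∑ m, pd j (fun y => v y m) x * christoffel g x i m k)
  + (∑ m, pd k (fun y => v y m) x * christoffel g x i j m)
  + pd j (fun y => pd k (fun z => v z i) y) x

/-- `v` is a projective vector field for `g` on `U`: its local flow takes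
unparametrized geodesics to geodesics; equivalently, the Lie derivative of the
Levi-Civita connection of `g` along `v` is of the projective form
`(𝓛_v Γ)^i_{jk} = δ^i_j φ_k + δ^i_k φ_j` for some 1-form `φ`. -/
def IsProjectiveVF (g : (ι → ℝ) → Matrix ι ι ℝ) (v : (ι → ℝ) → ι → ℝ)
    (U : Set (ι → ℝ)) : Prop :=
  ContDiffOn ℝ (⊤ : ℕ∞) v U ∧
  ∃ φ : (ι → ℝ) → ι → ℝ, ∀ x ∈ U, ∀ i j k : ι,
    lieDerivGamma g v x i j k
      = (if i = j then φ x k else 0) + (if i = k then φ x j else 0)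

/-- The Lie derivative of the metric `g` (a (0,2)-tensor) along `v`. -/
def lieDerivMetric (g : (ι → ℝ) → Matrix ι ι ℝ) (v : (ι → ℝ) → ι → ℝ)
    (x : ι → ℝ) : Matrix ι ι ℝ :=
  Matrix.of fun i j =>
    (∑ m, v x m * pd m (fun y => g y i j) x)
    + (∑ m, g x m j * pd i (fun y => v y m) x)
    + (∑ m, g x i m * pd j (fun y => v y m) x)

/-- The covariant derivative `∇_r L^i_j` of a (1,1)-tensor w.r.t. the Levi-Civita
connection of `g`. -/
def covDerivT (g L : (ι → ℝ) → Matrix ι ι ℝ) (x : ι → ℝ) (r i j : ι) : ℝ :=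
  pd r (fun y => L y i j) x
  + (∑ m, christoffel g x i r m * L x m j)
  - (∑ m, christoffel g x m r j * L x i m)

/-- `g` and `L` satisfy the compatibility equation (24):
`∇_r L^i_j = ½ (δ^i_r l_j + g^{is} l_s g_{rj})` with `l = d tr L`;
equivalently `g` and `ḡ = (det L)⁻¹ g L⁻¹` are geodesically equivalent. -/
def Compatible (g L : (ι → ℝ) → Matrix ι ι ℝ) (U : Set (ι → ℝ)) : Prop :=
  ∀ x ∈ U, ∀ r i j : ι,
    covDerivT g L x r i j
      = (1 / 2) * ((if i = r then 1 else 0) * pd j (fun y => (L y).trace) x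
          + (∑ s, (g x)⁻¹ i s * pd s (fun y => (L y).trace) x) * g x r j)

/-- Inclusion of the first `r` indices. -/
def inj1 {n r : ℕ} (hr : r ≤ n) (i : Fin r) : Fin n := Fin.castLE hr i

/-- Inclusion of the last `n - r` indices. -/
def inj2 {n r : ℕ} (i : Fin (n - r)) : Fin n :=
  ⟨r + (i : ℕ), by have := i.isLt; omega⟩

/-- The leaf `{y = const}` through `p`: the first `r` coordinates vary. -/
def slice1 {n r : ℕ} (hr : r ≤ n) (p : Fin n → ℝ) (z : Fin r → ℝ) : Fin n → ℝ :=
  fun i => if h : (i : ℕ) < r then z ⟨(i : ℕ), h⟩ else p i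

/-- The leaf `{x = const}` through `p`: the last `n - r` coordinates vary. -/
def slice2 {n : ℕ} (r : ℕ) (p : Fin n → ℝ) (z : Fin (n - r) → ℝ) : Fin n → ℝ :=
  fun i => if h : r ≤ (i : ℕ) then z ⟨(i : ℕ) - r, by have := i.isLt; omega⟩ else p i

/-- Restriction of a matrix-valued field to the first block along the leaf `{y = const}`. -/
def blk1 {n r : ℕ} (hr : r ≤ n) (A : (Fin n → ℝ) → Matrix (Fin n) (Fin n) ℝ)
    (p : Fin n → ℝ) : (Fin r → ℝ) → Matrix (Fin r) (Fin r) ℝ :=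
  fun z => Matrix.of fun i j => A (slice1 hr p z) (inj1 hr i) (inj1 hr j)

/-- Restriction of a matrix-valued field to the second block along the leaf `{x = const}`. -/
def blk2 {n : ℕ} (r : ℕ) (A : (Fin n → ℝ) → Matrix (Fin n) (Fin n) ℝ)
    (p : Fin n → ℝ) : (Fin (n - r) → ℝ) → Matrix (Fin (n - r)) (Fin (n - r)) ℝ :=
  fun z => Matrix.of fun i j => A (slice2 r p z) (inj2 i) (inj2 j)

/-- The matrix `A` is block-diagonal with respect to the splitting of the indices at `r`. -/
def IsBlockDiag {n : ℕ} (r : ℕ) (A : Matrix (Fin n) (Fin n) ℝ) : Prop :=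
  ∀ i j : Fin n,
    (((i : ℕ) < r ∧ r ≤ (j : ℕ)) ∨ (r ≤ (i : ℕ) ∧ (j : ℕ) < r)) → A i j = 0

lemma IsBlockDiag.apply_eq_zero_of_lt_le {n r : ℕ} {A : Matrix (Fin n) (Fin n) ℝ}
    (hA : IsBlockDiag r A) {i j : Fin n} (hi : (i : ℕ) < r) (hj : r ≤ (j : ℕ)) : A i j = 0 :=
  hA i j (Or.inl ⟨hi, hj⟩)

lemma IsBlockDiag.apply_eq_zero_of_le_lt {n r : ℕ} {A : Matrix (Fin n) (Fin n) ℝ}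
    (hA : IsBlockDiag r A) {i j : Fin n} (hi : r ≤ (i : ℕ)) (hj : (j : ℕ) < r) : A i j = 0 :=
  hA i j (Or.inr ⟨hi, hj⟩)

/-- A matrix is block-diagonal iff it commutes with the projection onto the first block. -/
lemma isBlockDiag_iff_commute {n r : ℕ} {A : Matrix (Fin n) (Fin n) ℝ} :
    IsBlockDiag r A ↔
      Commute (Matrix.diagonal fun i : Fin n => if (i : ℕ) < r then (1 : ℝ) else 0) A := by
  rw [commute_iff_eq, ← Matrix.ext_iff]
  simp only [Matrix.diagonal_mul, Matrix.mul_diagonal]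
  refine forall₂_congr fun i j => ?_
  by_cases hi : (i : ℕ) < r <;> by_cases hj : (j : ℕ) < r <;>
    simp [hi, hj, not_lt.mp, not_le, eq_comm]

lemma IsBlockDiag.inv {n r : ℕ} {A : Matrix (Fin n) (Fin n) ℝ} (hA : IsBlockDiag r A)
    (hdet : IsUnit A.det) : IsBlockDiag r A⁻¹ := by
  rw [isBlockDiag_iff_commute] at hA ⊢
  set P := Matrix.diagonal fun i : Fin n => if (i : ℕ) < r then (1 : ℝ) else 0
  calc P * A⁻¹ = A⁻¹ * (A * P) * A⁻¹ := by
        rw [← Matrix.mul_assoc, Matrix.nonsing_inv_mul _ hdet, Matrix.one_mul]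
    _ = A⁻¹ * P := by
        rw [← hA.eq, Matrix.mul_assoc, Matrix.mul_assoc, Matrix.mul_nonsing_inv _ hdet,
          Matrix.mul_one]

/-- A sum over all indices whose terms vanish on the second block reduces to the first block. -/
lemma sum_eq_sum_inj1 {n r : ℕ} (hr : r ≤ n) (f : Fin n → ℝ)
    (hf : ∀ i : Fin n, r ≤ (i : ℕ) → f i = 0) : ∑ i, f i = ∑ i, f (inj1 hr i) := by
  refine (Fintype.sum_of_injective (inj1 hr) (Fin.castLE_injective hr) _ _ ?_ fun _ => rfl).symm
  intro i hi
  refine hf i (le_of_not_gt fun h => hi ⟨⟨i, h⟩, rfl⟩)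

lemma inj1_lt {n r : ℕ} (hr : r ≤ n) (i : Fin r) : (inj1 hr i : ℕ) < r := i.isLt

lemma inj1_inj {n r : ℕ} (hr : r ≤ n) {i j : Fin r} : inj1 hr i = inj1 hr j ↔ i = j :=
  (Fin.castLE_injective hr).eq_iff

lemma slice1_self {n r : ℕ} (hr : r ≤ n) (x : Fin n → ℝ) :
    slice1 hr x (fun i => x (inj1 hr i)) = x := by
  ext i
  simp [slice1, inj1]

/-- The inverse of a block-diagonal matrix is computed blockwise. -/
lemma inv_blk1_apply {n r : ℕ} (hr : r ≤ n) {A : (Fin n → ℝ) → Matrix (Fin n) (Fin n) ℝ}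
    {p : Fin n → ℝ} {z : Fin r → ℝ} (hA : IsBlockDiag r (A (slice1 hr p z)))
    (hdet : IsUnit (A (slice1 hr p z)).det) (i j : Fin r) :
    (blk1 hr A p z)⁻¹ i j = (A (slice1 hr p z))⁻¹ (inj1 hr i) (inj1 hr j) := by
  have key : blk1 hr A p z *
      Matrix.of (fun i j => (A (slice1 hr p z))⁻¹ (inj1 hr i) (inj1 hr j)) = 1 := by
    ext a b
    have h := congrFun₂ (Matrix.mul_nonsing_inv _ hdet) (inj1 hr a) (inj1 hr b)
    rw [Matrix.mul_apply, sum_eq_sum_inj1 hr _ fun m hm => by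
      rw [hA.apply_eq_zero_of_lt_le (inj1_lt hr a) hm, zero_mul]] at h
    simpa [Matrix.mul_apply, blk1, Matrix.one_apply, inj1_inj] using h
  rw [Matrix.inv_eq_right_inv key, Matrix.of_apply]

lemma pd_congr {κ : Type} [DecidableEq κ] {j : κ} {F G : (κ → ℝ) → ℝ} {U : Set (κ → ℝ)}
    (hU : IsOpen U) {x : κ → ℝ} (hx : x ∈ U) (h : ∀ y ∈ U, F y = G y) : pd j F x = pd j G x := by
  have h' : F =ᶠ[nhds x] G := eventually_of_mem (hU.mem_nhds hx) h
  rw [pd, pd, h'.fderiv_eq]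

lemma pd_sum {κ : Type*} (s : Finset κ) (j : ι) {F : κ → (ι → ℝ) → ℝ} {x : ι → ℝ}
    (h : ∀ i ∈ s, DifferentiableAt ℝ (F i) x) :
    pd j (fun y => ∑ i ∈ s, F i y) x = ∑ i ∈ s, pd j (F i) x := by
  simp only [pd]
  rw [fderiv_fun_sum h, _root_.sum_apply]

lemma pd_zero {κ : Type} [DecidableEq κ] (j : κ) (x : κ → ℝ) : pd j (fun _ => 0) x = 0 := by
  simp [pd]

lemma IsBlockDiag.pd {n r : ℕ} {A : (Fin n → ℝ) → Matrix (Fin n) (Fin n) ℝ}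
    {U : Set (Fin n → ℝ)} (hU : IsOpen U) (hA : ∀ x ∈ U, IsBlockDiag r (A x))
    {x : Fin n → ℝ} (hx : x ∈ U) (k : Fin n) :
    IsBlockDiag r (Matrix.of fun i j => pd k (fun y => A y i j) x) := by
  intro i j hij
  rw [Matrix.of_apply, pd_congr hU hx fun y hy => hA y hy i j hij, pd_zero]

lemma hasFDerivAt_slice1 {n r : ℕ} (hr : r ≤ n) (p : Fin n → ℝ) (z : Fin r → ℝ) :
    HasFDerivAt (slice1 hr p)
      (ContinuousLinearMap.pi fun i : Fin n =>
        if h : (i : ℕ) < r then ContinuousLinearMap.proj (R := ℝ) (φ := fun _ : Fin r => ℝ) ⟨i, h⟩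
        else 0) z := by
  rw [hasFDerivAt_pi']
  intro i
  by_cases h : (i : ℕ) < r
  · simpa [slice1, h, ContinuousLinearMap.proj_pi] using hasFDerivAt_apply (𝕜 := ℝ) ⟨i, h⟩ z
  · simpa [slice1, h, ContinuousLinearMap.proj_pi] using hasFDerivAt_const (𝕜 := ℝ) (p i) z

/-- Partial derivatives along a leaf `{y = const}` are the ambient ones. -/
lemma pd_comp_slice1 {n r : ℕ} (hr : r ≤ n) (p : Fin n → ℝ) (z : Fin r → ℝ) (k : Fin r)
    {F : (Fin n → ℝ) → ℝ} (hF : DifferentiableAt ℝ F (slice1 hr p z)) :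
    pd k (fun w => F (slice1 hr p w)) z = pd (inj1 hr k) F (slice1 hr p z) := by
  have h := hF.hasFDerivAt.comp z (hasFDerivAt_slice1 hr p z)
  have h' : fderiv ℝ (fun w => F (slice1 hr p w)) z = _ := h.fderiv
  rw [pd, pd, h', ContinuousLinearMap.comp_apply]
  congr 1
  ext i
  by_cases hi : (i : ℕ) < r
  · simp [hi, Pi.single_apply, inj1, Fin.ext_iff]
  · have : i ≠ inj1 hr k := fun e => hi (e ▸ k.isLt)
    simp [hi, this]

section Christoffel

variable {n r : ℕ} {g : (Fin n → ℝ) → Matrix (Fin n) (Fin n) ℝ} {x : Fin n → ℝ}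

lemma christoffel_lt_lt_le (hinv : IsBlockDiag r (g x)⁻¹)
    (hpd : ∀ m, IsBlockDiag r (Matrix.of fun i j => pd m (fun y => g y i j) x))
    {i k b : Fin n} (hi : (i : ℕ) < r) (hk : (k : ℕ) < r) (hb : r ≤ (b : ℕ)) :
    christoffel g x i k b = (1 / 2) * ∑ m, (g x)⁻¹ i m * pd b (fun y => g y m k) x := by
  rw [christoffel]
  congr 1
  refine Finset.sum_congr rfl fun m _ => ?_
  have h1 := (hpd m).apply_eq_zero_of_lt_le hk hb
  rw [Matrix.of_apply] at h1
  rcases lt_or_ge (m : ℕ) r with hm | hm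
  · have h2 := (hpd k).apply_eq_zero_of_lt_le hm hb
    rw [Matrix.of_apply] at h2
    rw [h1, h2]
    ring
  · rw [hinv.apply_eq_zero_of_lt_le hi hm]
    ring

lemma christoffel_le_lt_le (hinv : IsBlockDiag r (g x)⁻¹)
    (hpd : ∀ m, IsBlockDiag r (Matrix.of fun i j => pd m (fun y => g y i j) x))
    {a k b : Fin n} (ha : r ≤ (a : ℕ)) (hk : (k : ℕ) < r) (hb : r ≤ (b : ℕ)) :
    christoffel g x a k b = (1 / 2) * ∑ m, (g x)⁻¹ a m * pd k (fun y => g y m b) x := by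
  rw [christoffel]
  congr 1
  refine Finset.sum_congr rfl fun m _ => ?_
  have h1 := (hpd m).apply_eq_zero_of_lt_le hk hb
  rw [Matrix.of_apply] at h1
  rcases lt_or_ge (m : ℕ) r with hm | hm
  · rw [hinv.apply_eq_zero_of_le_lt ha hm]
    ring
  · have h2 := (hpd b).apply_eq_zero_of_le_lt hm hk
    rw [Matrix.of_apply] at h2
    rw [h1, h2]
    ring

lemma christoffel_le_lt_lt (hinv : IsBlockDiag r (g x)⁻¹)
    (hpd : ∀ m, IsBlockDiag r (Matrix.of fun i j => pd m (fun y => g y i j) x))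
    {a k j : Fin n} (ha : r ≤ (a : ℕ)) (hk : (k : ℕ) < r) (hj : (j : ℕ) < r) :
    christoffel g x a k j = -((1 / 2) * ∑ m, (g x)⁻¹ a m * pd m (fun y => g y k j) x) := by
  rw [christoffel, ← mul_neg, ← Finset.sum_neg_distrib]
  congr 1
  refine Finset.sum_congr rfl fun m _ => ?_
  rcases lt_or_ge (m : ℕ) r with hm | hm
  · rw [hinv.apply_eq_zero_of_le_lt ha hm]
    ring
  · have h1 := (hpd k).apply_eq_zero_of_le_lt hm hj
    have h2 := (hpd j).apply_eq_zero_of_le_lt hm hk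
    rw [Matrix.of_apply] at h1 h2
    rw [h1, h2]
    ring

end Christoffel

/-- The Christoffel symbols of the first block of a block-diagonal metric along a leaf
`{y = const}` are the ambient ones. -/
lemma christoffel_blk1 {n r : ℕ} (hr : r ≤ n) {g : (Fin n → ℝ) → Matrix (Fin n) (Fin n) ℝ}
    {p : Fin n → ℝ} {z : Fin r → ℝ} (hg : IsBlockDiag r (g (slice1 hr p z)))
    (hdet : IsUnit (g (slice1 hr p z)).det)
    (hdiff : ∀ i j, DifferentiableAt ℝ (fun y => g y i j) (slice1 hr p z)) (i j k : Fin r) :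
    christoffel (blk1 hr g p) z i j k
      = christoffel g (slice1 hr p z) (inj1 hr i) (inj1 hr j) (inj1 hr k) := by
  have hpd : ∀ a b c : Fin r, pd a (fun w => blk1 hr g p w b c) z
      = pd (inj1 hr a) (fun y => g y (inj1 hr b) (inj1 hr c)) (slice1 hr p z) :=
    fun a b c => pd_comp_slice1 hr p z a (hdiff _ _)
  rw [christoffel, christoffel, sum_eq_sum_inj1 hr _ fun m hm => by
    rw [(hg.inv hdet).apply_eq_zero_of_lt_le (inj1_lt hr i) hm, zero_mul]]
  simp only [hpd, inv_blk1_apply hr hg hdet]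

/-- Covariant differentiation of the first block along a leaf `{y = const}` is the ambient one. -/
lemma covDerivT_blk1 {n r : ℕ} (hr : r ≤ n) {g L : (Fin n → ℝ) → Matrix (Fin n) (Fin n) ℝ}
    {p : Fin n → ℝ} {z : Fin r → ℝ} (hg : IsBlockDiag r (g (slice1 hr p z)))
    (hdet : IsUnit (g (slice1 hr p z)).det) (hL : IsBlockDiag r (L (slice1 hr p z)))
    (hgdiff : ∀ i j, DifferentiableAt ℝ (fun y => g y i j) (slice1 hr p z))
    (hLdiff : ∀ i j, DifferentiableAt ℝ (fun y => L y i j) (slice1 hr p z)) (k i j : Fin r) :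
    covDerivT (blk1 hr g p) (blk1 hr L p) z k i j
      = covDerivT g L (slice1 hr p z) (inj1 hr k) (inj1 hr i) (inj1 hr j) := by
  have hpd : pd k (fun w => blk1 hr L p w i j) z
      = pd (inj1 hr k) (fun y => L y (inj1 hr i) (inj1 hr j)) (slice1 hr p z) :=
    pd_comp_slice1 hr p z k (hLdiff _ _)
  rw [covDerivT, covDerivT, hpd,
    sum_eq_sum_inj1 hr (fun m => christoffel g _ _ _ m * L _ m _) fun m hm => by
      rw [hL.apply_eq_zero_of_le_lt hm (inj1_lt hr j), mul_zero],
    sum_eq_sum_inj1 hr (fun m => christoffel g _ m _ _ * L _ _ m) fun m hm => by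
      rw [hL.apply_eq_zero_of_lt_le (inj1_lt hr i) hm, mul_zero]]
  simp only [christoffel_blk1 hr hg hdet hgdiff]
  rfl

/-- Differentiating the trace of `L = diag(L₁(x), L₂(y))` in a direction of the second block only
sees the trace of the second block. -/
lemma pd_trace_of_le {n r : ℕ} {L : (Fin n → ℝ) → Matrix (Fin n) (Fin n) ℝ} {x : Fin n → ℝ}
    (hLdiff : ∀ i j, DifferentiableAt ℝ (fun y => L y i j) x)
    (hL1 : ∀ i j : Fin n, (i : ℕ) < r → (j : ℕ) < r →
      ∀ m : Fin n, r ≤ (m : ℕ) → pd m (fun y => L y i j) x = 0)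
    {a : Fin n} (ha : r ≤ (a : ℕ)) :
    pd a (fun y => (L y).trace) x
      = pd a (fun y => ∑ b : Fin n, if r ≤ (b : ℕ) then L y b b else 0) x := by
  have hdiff : ∀ b ∈ (Finset.univ : Finset (Fin n)),
      DifferentiableAt ℝ (fun y => if r ≤ (b : ℕ) then L y b b else 0) x := by
    intro b _
    split_ifs
    · exact hLdiff b b
    · exact differentiableAt_const _
  have htr : pd a (fun y => (L y).trace) x = ∑ b, pd a (fun y => L y b b) x :=
    pd_sum Finset.univ a fun b _ => hLdiff b b
  rw [htr, pd_sum _ _ hdiff]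
  refine Finset.sum_congr rfl fun b _ => ?_
  split_ifs with hb
  · rfl
  · rw [pd_zero, hL1 b b (not_le.mp hb) (not_le.mp hb) a ha]

/-- Differentiating the trace of `L = diag(L₁(x), L₂(y))` in a direction of the first block only
sees the trace of the first block. -/
lemma pd_trace_blk1 {n r : ℕ} (hr : r ≤ n) {L : (Fin n → ℝ) → Matrix (Fin n) (Fin n) ℝ}
    {p : Fin n → ℝ} {z : Fin r → ℝ}
    (hLdiff : ∀ i j, DifferentiableAt ℝ (fun y => L y i j) (slice1 hr p z))
    (hL2 : ∀ i j : Fin n, r ≤ (i : ℕ) → r ≤ (j : ℕ) →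
      ∀ m : Fin n, (m : ℕ) < r → pd m (fun y => L y i j) (slice1 hr p z) = 0) (k : Fin r) :
    pd k (fun w => (blk1 hr L p w).trace) z
      = pd (inj1 hr k) (fun y => (L y).trace) (slice1 hr p z) := by
  have htr : pd (inj1 hr k) (fun y => (L y).trace) (slice1 hr p z)
      = ∑ b, pd (inj1 hr k) (fun y => L y b b) (slice1 hr p z) :=
    pd_sum Finset.univ _ fun b _ => hLdiff b b
  have hblk : ∀ w, (blk1 hr L p w).trace
      = ∑ b, (fun y => L y (inj1 hr b) (inj1 hr b)) (slice1 hr p w) := fun _ => rfl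
  simp only [hblk]
  rw [htr, sum_eq_sum_inj1 hr _ fun b hb => hL2 b b hb hb _ (inj1_lt hr k),
    pd_comp_slice1 hr p z k (F := fun y => ∑ b, L y (inj1 hr b) (inj1 hr b))
      (DifferentiableAt.fun_sum fun b _ => hLdiff _ _),
    pd_sum _ _ fun b _ => hLdiff _ _]

section CovariantDerivative

variable {n r : ℕ} {g L : (Fin n → ℝ) → Matrix (Fin n) (Fin n) ℝ} {x : Fin n → ℝ}

lemma covDerivT_lt_lt_le (hinv : IsBlockDiag r (g x)⁻¹)
    (hpd : ∀ m, IsBlockDiag r (Matrix.of fun i j => pd m (fun y => g y i j) x))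
    (hL : IsBlockDiag r (L x))
    (hLpd : ∀ m, IsBlockDiag r (Matrix.of fun i j => pd m (fun y => L y i j) x))
    {k i a : Fin n} (hk : (k : ℕ) < r) (hi : (i : ℕ) < r) (ha : r ≤ (a : ℕ)) :
    covDerivT g L x k i a = (1 / 2) *
      ((∑ b : Fin n, if r ≤ (b : ℕ) then
          (∑ m, (g x)⁻¹ i m * pd b (fun y => g y m k) x) * L x b a else 0)
        - (∑ m : Fin n, if (m : ℕ) < r then
            L x i m * (∑ l, (g x)⁻¹ m l * pd a (fun y => g y l k) x) else 0)) := by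
  have h0 := (hLpd k).apply_eq_zero_of_lt_le hi ha
  rw [Matrix.of_apply] at h0
  rw [covDerivT, h0, zero_add, mul_sub, Finset.mul_sum, Finset.mul_sum]
  congr 1 <;> refine Finset.sum_congr rfl fun b _ => ?_ <;> split_ifs with hb
  · rw [christoffel_lt_lt_le hinv hpd hi hk hb]
    ring
  · rw [hL.apply_eq_zero_of_lt_le (not_le.mp hb) ha]
    ring
  · rw [christoffel_lt_lt_le hinv hpd hb hk ha]
    ring
  · rw [hL.apply_eq_zero_of_lt_le hi (not_lt.mp hb)]
    ring

lemma covDerivT_lt_le_le (hinv : IsBlockDiag r (g x)⁻¹)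
    (hpd : ∀ m, IsBlockDiag r (Matrix.of fun i j => pd m (fun y => g y i j) x))
    (hL : IsBlockDiag r (L x))
    (hL2 : ∀ i j : Fin n, r ≤ (i : ℕ) → r ≤ (j : ℕ) →
      ∀ m : Fin n, (m : ℕ) < r → pd m (fun y => L y i j) x = 0)
    {k a c : Fin n} (hk : (k : ℕ) < r) (ha : r ≤ (a : ℕ)) (hc : r ≤ (c : ℕ)) :
    covDerivT g L x k a c = (1 / 2) *
      ((∑ b : Fin n, if r ≤ (b : ℕ) then
          (∑ m, (g x)⁻¹ a m * pd k (fun y => g y m b) x) * L x b c else 0)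
        - (∑ b : Fin n, if r ≤ (b : ℕ) then
            L x a b * (∑ m, (g x)⁻¹ b m * pd k (fun y => g y m c) x) else 0)) := by
  rw [covDerivT, hL2 a c ha hc k hk, zero_add, mul_sub, Finset.mul_sum, Finset.mul_sum]
  congr 1 <;> refine Finset.sum_congr rfl fun b _ => ?_ <;> split_ifs with hb
  · rw [christoffel_le_lt_le hinv hpd ha hk hb]
    ring
  · rw [hL.apply_eq_zero_of_lt_le (not_le.mp hb) hc]
    ring
  · rw [christoffel_le_lt_le hinv hpd hb hk hc]
    ring
  · rw [hL.apply_eq_zero_of_le_lt ha (not_le.mp hb)]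
    ring

lemma covDerivT_lt_le_lt (hinv : IsBlockDiag r (g x)⁻¹)
    (hpd : ∀ m, IsBlockDiag r (Matrix.of fun i j => pd m (fun y => g y i j) x))
    (hL : IsBlockDiag r (L x))
    (hLpd : ∀ m, IsBlockDiag r (Matrix.of fun i j => pd m (fun y => L y i j) x))
    {k a j : Fin n} (hk : (k : ℕ) < r) (ha : r ≤ (a : ℕ)) (hj : (j : ℕ) < r) :
    covDerivT g L x k a j = (1 / 2) *
      ((∑ m, L x a m * ∑ s, (g x)⁻¹ m s * pd s (fun y => g y k j) x)
        - ∑ m, (∑ s, (g x)⁻¹ a s * pd s (fun y => g y k m) x) * L x m j) := by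
  have h0 := (hLpd k).apply_eq_zero_of_le_lt ha hj
  rw [Matrix.of_apply] at h0
  have h1 : ∀ m, christoffel g x a k m * L x m j
      = -((1 / 2) * ((∑ s, (g x)⁻¹ a s * pd s (fun y => g y k m) x) * L x m j)) := by
    intro m
    rcases lt_or_ge (m : ℕ) r with hm | hm
    · rw [christoffel_le_lt_lt hinv hpd ha hk hm]
      ring
    · rw [hL.apply_eq_zero_of_le_lt hm hj]
      ring
  have h2 : ∀ m, christoffel g x m k j * L x a m
      = -((1 / 2) * (L x a m * ∑ s, (g x)⁻¹ m s * pd s (fun y => g y k j) x)) := by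
    intro m
    rcases lt_or_ge (m : ℕ) r with hm | hm
    · rw [hL.apply_eq_zero_of_le_lt ha hm]
      ring
    · rw [christoffel_le_lt_lt hinv hpd hm hk hj]
      ring
  rw [covDerivT, h0, Finset.sum_congr rfl fun m _ => h1 m, Finset.sum_congr rfl fun m _ => h2 m,
    Finset.sum_neg_distrib, Finset.sum_neg_distrib, ← Finset.mul_sum, ← Finset.mul_sum]
  ring

end CovariantDerivative

/-- For a `G`-self-adjoint `L`, conjugation by `G` is transposition. -/
lemma mul_mul_inv_eq_transpose {G L : Matrix ι ι ℝ} (hG : Gᵀ = G) (hdet : IsUnit G.det)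
    (hsa : (G * L)ᵀ = G * L) : G * L * G⁻¹ = Lᵀ := by
  rw [← hsa, Matrix.transpose_mul, hG, Matrix.mul_assoc, Matrix.mul_nonsing_inv _ hdet,
    Matrix.mul_one]

lemma mul_inv_eq_inv_mul_transpose {G L : Matrix ι ι ℝ} (hG : Gᵀ = G) (hdet : IsUnit G.det)
    (hsa : (G * L)ᵀ = G * L) : L * G⁻¹ = G⁻¹ * Lᵀ := by
  rw [← mul_mul_inv_eq_transpose hG hdet hsa, Matrix.mul_assoc, ← Matrix.mul_assoc G⁻¹,
    Matrix.nonsing_inv_mul _ hdet, Matrix.one_mul]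

/-- The equation `(G⁻¹ D_b)L^b_a − L(G⁻¹ D_a) = λ·Id`, restricted to its `k`-th column and with
the upper index lowered by means of `G`. -/
lemma lowered_of_mulVec_eq {G L : Matrix ι ι ℝ} (hG : Gᵀ = G) (hdet : IsUnit G.det)
    (hsa : (G * L)ᵀ = G * L) {v : ι → ι → ℝ} {c : ℝ} {a k : ι}
    (h : (∑ b, L b a • G⁻¹ *ᵥ v b) - L *ᵥ (G⁻¹ *ᵥ v a) = c • Pi.single k 1) (j : ι) :
    (∑ b, L b a * v b j) - ∑ m, L m j * v a m = c * G j k := by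
  have h' := congrFun (congrArg (G *ᵥ ·) h) j
  have hsum : G *ᵥ (∑ b, L b a • G⁻¹ *ᵥ v b) = ∑ b, L b a • v b := by
    rw [Matrix.mulVec_sum]
    refine Finset.sum_congr rfl fun b _ => ?_
    rw [Matrix.mulVec_smul, Matrix.mulVec_mulVec, Matrix.mul_nonsing_inv _ hdet,
      Matrix.one_mulVec]
  simp only [Matrix.mulVec_sub, hsum] at h'
  rw [Matrix.mulVec_mulVec, Matrix.mulVec_mulVec,
    mul_mul_inv_eq_transpose hG hdet hsa, Matrix.mulVec_smul, Matrix.mulVec_single_one] at h'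
  simpa [Matrix.mulVec, dotProduct, Finset.sum_apply] using h'

/-- The compatibility equation with a lower index in the first block and the upper one in the
second block follows from the one with the positions exchanged, since `L` is self-adjoint. -/
lemma raised_of_lowered {G L : Matrix ι ι ℝ} (hG : Gᵀ = G) (hdet : IsUnit G.det)
    (hsa : (G * L)ᵀ = G * L) {w : ι → ι → ℝ} {l : ι → ℝ} {a j : ι} {c : ℝ}
    (h : ∀ s, G⁻¹ a s ≠ 0 → (∑ b, L b s * w b j) - ∑ m, L m j * w s m = l s * c) :
    (∑ m, L a m * ∑ s, G⁻¹ m s * w s j) - ∑ m, (∑ s, G⁻¹ a s * w s m) * L m j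
      = (∑ s, G⁻¹ a s * l s) * c := by
  have h1 : ∑ m, L a m * ∑ s, G⁻¹ m s * w s j = ∑ s, G⁻¹ a s * ∑ b, L b s * w b j := by
    have := congrFun (congrArg (· *ᵥ fun s => w s j)
      (mul_inv_eq_inv_mul_transpose hG hdet hsa)) a
    simp only [← Matrix.mulVec_mulVec] at this
    simpa only [Matrix.mulVec, dotProduct, Matrix.transpose_apply] using this
  have h2 : ∑ m, (∑ s, G⁻¹ a s * w s m) * L m j = ∑ s, G⁻¹ a s * ∑ m, L m j * w s m := by
    simp only [Finset.sum_mul, Finset.mul_sum]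
    rw [Finset.sum_comm]
    exact Finset.sum_congr rfl fun _ _ => Finset.sum_congr rfl fun _ _ => by ring
  rw [h1, h2, ← Finset.sum_sub_distrib, Finset.sum_mul]
  refine Finset.sum_congr rfl fun s _ => ?_
  by_cases hs : G⁻¹ a s = 0
  · simp [hs]
  · rw [← mul_sub, h s hs, mul_assoc]

theorem stmt18 {n r : ℕ} (hr : r ≤ n) (U : Set (Fin n → ℝ)) (hU : IsOpen U)
    (g : (Fin n → ℝ) → Matrix (Fin n) (Fin n) ℝ) (hg : IsMetricOn g U)
    (L : (Fin n → ℝ) → Matrix (Fin n) (Fin n) ℝ)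
    (hLsmooth : ∀ i j, ContDiffOn ℝ (⊤ : ℕ∞) (fun x => L x i j) U)
    (hLsa : ∀ x ∈ U, (g x * L x)ᵀ = g x * L x)
    (hLdet : ∀ x ∈ U, IsUnit (L x).det)
    -- `g` and `L` are block-diagonal, `g = diag(g₁(x,y), g₂(x,y))`,
    -- `L = diag(L₁(x), L₂(y))`
    (hgblock : ∀ x ∈ U, ∀ i j : Fin n,
      (((i : ℕ) < r ∧ r ≤ (j : ℕ)) ∨ (r ≤ (i : ℕ) ∧ (j : ℕ) < r)) → g x i j = 0)
    (hLblock : ∀ x ∈ U, ∀ i j : Fin n,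
      (((i : ℕ) < r ∧ r ≤ (j : ℕ)) ∨ (r ≤ (i : ℕ) ∧ (j : ℕ) < r)) → L x i j = 0)
    (hL1x : ∀ x ∈ U, ∀ i j : Fin n, (i : ℕ) < r → (j : ℕ) < r →
      ∀ m : Fin n, r ≤ (m : ℕ) → pd m (fun y => L y i j) x = 0)
    (hL2y : ∀ x ∈ U, ∀ i j : Fin n, r ≤ (i : ℕ) → r ≤ (j : ℕ) →
      ∀ m : Fin n, (m : ℕ) < r → pd m (fun y => L y i j) x = 0) :
    -- the compatibility equation for all `u ∈ D₁` …
    ((∀ x ∈ U, ∀ k : Fin n, (k : ℕ) < r → ∀ i j : Fin n,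
        covDerivT g L x k i j
          = (1 / 2) * ((if i = k then 1 else 0) * pd j (fun y => (L y).trace) x
              + (∑ s, (g x)⁻¹ i s * pd s (fun y => (L y).trace) x) * g x k j))
      ↔
      -- … is equivalent to the conjunction of the three conditions:
      -- Condition 1: `g₁(·,y)` and `L₁` are compatible on every leaf `{y = const}`
      ((∀ p ∈ U, Compatible (blk1 hr g p) (blk1 hr L p) {z | slice1 hr p z ∈ U}) ∧
      -- Condition 2: `(g₁⁻¹ d_y g₁)L₂ − L₁(g₁⁻¹ d_y g₁) = Id ⊗ d_y tr L₂`
      (∀ x ∈ U, ∀ j k : Fin n, (j : ℕ) < r → (k : ℕ) < r →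
        ∀ α : Fin n, r ≤ (α : ℕ) →
        (∑ β : Fin n, if r ≤ (β : ℕ) then
            (∑ m, (g x)⁻¹ j m * pd β (fun y => g y m k) x) * L x β α else 0)
          - (∑ m : Fin n, if (m : ℕ) < r then
              L x j m * (∑ l, (g x)⁻¹ m l * pd α (fun y => g y l k) x) else 0)
          = (if j = k then 1 else 0) *
              pd α (fun y => ∑ β : Fin n, if r ≤ (β : ℕ) then L y β β else 0) x) ∧
      -- Condition 3: `(g₂⁻¹ d_x g₂)L₂ − L₂(g₂⁻¹ d_x g₂) = 0`
      (∀ x ∈ U, ∀ k : Fin n, (k : ℕ) < r → ∀ α γ : Fin n,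
        r ≤ (α : ℕ) → r ≤ (γ : ℕ) →
        (∑ β : Fin n, if r ≤ (β : ℕ) then
            (∑ μ, (g x)⁻¹ α μ * pd k (fun y => g y μ β) x) * L x β γ else 0)
          - (∑ β : Fin n, if r ≤ (β : ℕ) then
              L x α β * (∑ μ, (g x)⁻¹ β μ * pd k (fun y => g y μ γ) x) else 0)
          = 0))) := by
  have hinv : ∀ x ∈ U, IsBlockDiag r (g x)⁻¹ := fun x hx =>
    IsBlockDiag.inv (hgblock x hx) (hg.nondeg x hx)
  have hgpd : ∀ x ∈ U, ∀ m, IsBlockDiag r (Matrix.of fun i j => pd m (fun y => g y i j) x) :=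
    fun x hx m => IsBlockDiag.pd hU hgblock hx m
  have hLpd : ∀ x ∈ U, ∀ m, IsBlockDiag r (Matrix.of fun i j => pd m (fun y => L y i j) x) :=
    fun x hx m => IsBlockDiag.pd hU hLblock hx m
  have hgdiff : ∀ x ∈ U, ∀ i j, DifferentiableAt ℝ (fun y => g y i j) x := fun x hx i j =>
    ((hg.smooth i j).contDiffAt (hU.mem_nhds hx)).differentiableAt (by simp)
  have hLdiff : ∀ x ∈ U, ∀ i j, DifferentiableAt ℝ (fun y => L y i j) x := fun x hx i j =>
    ((hLsmooth i j).contDiffAt (hU.mem_nhds hx)).differentiableAt (by simp)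
  have hgsymm : ∀ x ∈ U, ∀ m i j,
      pd m (fun y => g y i j) x = pd m (fun y => g y j i) x := fun x hx m i j =>
    pd_congr hU hx fun y hy => congrFun₂ (hg.symm y hy) j i
  -- both indices in the first block
  have leaf : ∀ (p : Fin n → ℝ) (z : Fin r → ℝ), slice1 hr p z ∈ U → ∀ k i j : Fin r,
      (covDerivT (blk1 hr g p) (blk1 hr L p) z k i j
        = (1 / 2) * ((if i = k then 1 else 0) * pd j (fun y => (blk1 hr L p y).trace) z
          + (∑ s, (blk1 hr g p z)⁻¹ i s * pd s (fun y => (blk1 hr L p y).trace) z)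
            * blk1 hr g p z k j)) ↔
      (covDerivT g L (slice1 hr p z) (inj1 hr k) (inj1 hr i) (inj1 hr j)
        = (1 / 2) * ((if inj1 hr i = inj1 hr k then 1 else 0)
            * pd (inj1 hr j) (fun y => (L y).trace) (slice1 hr p z)
          + (∑ s, (g (slice1 hr p z))⁻¹ (inj1 hr i) s
              * pd s (fun y => (L y).trace) (slice1 hr p z))
            * g (slice1 hr p z) (inj1 hr k) (inj1 hr j))) := by
    intro p z hz k i j
    rw [covDerivT_blk1 hr (hgblock _ hz) (hg.nondeg _ hz) (hLblock _ hz) (hgdiff _ hz)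
      (hLdiff _ hz), sum_eq_sum_inj1 hr (fun s => (g (slice1 hr p z))⁻¹ _ s * _) fun s hs => by
        rw [(hinv _ hz).apply_eq_zero_of_lt_le (inj1_lt hr i) hs, zero_mul]]
    simp only [pd_trace_blk1 hr (hLdiff _ hz) (hL2y _ hz),
      inv_blk1_apply hr (hgblock _ hz) (hg.nondeg _ hz), inj1_inj]
    rfl
  constructor
  · intro h
    refine ⟨fun p _ z hz k i j => (leaf p z hz k i j).2 (h _ hz _ (inj1_lt hr k) _ _), ?_, ?_⟩
    · intro x hx j k hj hk a ha
      have e := h x hx k hk j a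
      rw [covDerivT_lt_lt_le (hinv x hx) (hgpd x hx) (hLblock x hx) (hLpd x hx) hk hj ha,
        hgblock x hx k a (Or.inl ⟨hk, ha⟩), mul_zero, add_zero,
        pd_trace_of_le (hLdiff x hx) (hL1x x hx) ha] at e
      exact mul_left_cancel₀ (by norm_num) e
    · intro x hx k hk a c ha hc
      have e := h x hx k hk a c
      have hak : a ≠ k := fun e => absurd hk (not_lt.mpr (e ▸ ha))
      rw [covDerivT_lt_le_le (hinv x hx) (hgpd x hx) (hLblock x hx) (hL2y x hx) hk ha hc,
        hgblock x hx k c (Or.inl ⟨hk, hc⟩), if_neg hak, zero_mul, mul_zero, add_zero] at e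
      exact mul_left_cancel₀ (by norm_num) e
  · rintro ⟨h1, h2, h3⟩ x hx k hk i j
    rcases lt_or_ge (i : ℕ) r with hi | hi <;> rcases lt_or_ge (j : ℕ) r with hj | hj
    · have hx' : slice1 hr x (fun i => x (inj1 hr i)) ∈ U := by rwa [slice1_self]
      have e := (leaf x _ hx' ⟨k, hk⟩ ⟨i, hi⟩ ⟨j, hj⟩).1 (h1 x hx _ hx' _ _ _)
      rw [slice1_self] at e
      exact e
    · rw [covDerivT_lt_lt_le (hinv x hx) (hgpd x hx) (hLblock x hx) (hLpd x hx) hk hi hj,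
        h2 x hx i k hi hk j hj, hgblock x hx k j (Or.inl ⟨hk, hj⟩), mul_zero, add_zero,
        pd_trace_of_le (hLdiff x hx) (hL1x x hx) hj]
    · have hik : i ≠ k := fun e => absurd hk (not_lt.mpr (e ▸ hi))
      rw [covDerivT_lt_le_lt (hinv x hx) (hgpd x hx) (hLblock x hx) (hLpd x hx) hk hi hj,
        if_neg hik, zero_mul, zero_add]
      congr 1
      refine raised_of_lowered (w := fun s m => pd s (fun y => g y k m) x)
        (hg.symm x hx) (hg.nondeg x hx) (hLsa x hx) fun a ha0 => ?_
      have ha : r ≤ (a : ℕ) := not_lt.mp fun ha =>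
        ha0 ((hinv x hx).apply_eq_zero_of_le_lt hi ha)
      have hgkj : g x k j = g x j k := congrFun₂ (hg.symm x hx) j k
      rw [hgkj]
      refine lowered_of_mulVec_eq (v := fun s m => pd s (fun y => g y k m) x)
        (hg.symm x hx) (hg.nondeg x hx) (hLsa x hx) ?_ j
      ext q
      have hvec : ∀ s m, ((g x)⁻¹ *ᵥ fun m => pd s (fun y => g y k m) x) m
          = ∑ l, (g x)⁻¹ m l * pd s (fun y => g y l k) x := by
        intro s m
        simp only [Matrix.mulVec, dotProduct, hgsymm x hx s k]
      have hzero : ∀ s m : Fin n, r ≤ (m : ℕ) →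
          ∑ l, (g x)⁻¹ m l * pd s (fun y => g y l k) x = 0 := fun s m hm =>
        Finset.sum_eq_zero fun l _ => by
          rcases lt_or_ge (l : ℕ) r with hl | hl
          · rw [(hinv x hx).apply_eq_zero_of_le_lt hm hl, zero_mul]
          · have := (hgpd x hx s).apply_eq_zero_of_le_lt hl hk
            rw [Matrix.of_apply] at this
            rw [this, mul_zero]
      have hmul : (L x *ᵥ ((g x)⁻¹ *ᵥ fun m => pd a (fun y => g y k m) x)) q
          = ∑ m, L x q m * ∑ l, (g x)⁻¹ m l * pd a (fun y => g y l k) x := by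
        rw [Matrix.mulVec, dotProduct]
        simp only [hvec]
      rw [Pi.sub_apply, Finset.sum_apply, hmul]
      simp only [Pi.smul_apply, hvec, smul_eq_mul, Pi.single_apply]
      rcases lt_or_ge (q : ℕ) r with hq | hq
      · rw [mul_comm (pd a _ x), pd_trace_of_le (hLdiff x hx) (hL1x x hx) ha,
          ← h2 x hx q k hq hk a ha]
        congr 1 <;> refine Finset.sum_congr rfl fun b _ => ?_ <;> split_ifs with hb
        · rw [mul_comm]
        · rw [hLblock x hx b a (Or.inl ⟨not_le.mp hb, ha⟩), zero_mul]
        · rfl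
        · rw [hLblock x hx q b (Or.inl ⟨hq, not_lt.mp hb⟩), zero_mul]
      · have hqk : q ≠ k := fun e => absurd hk (not_lt.mpr (e ▸ hq))
        rw [if_neg hqk, mul_zero, Finset.sum_eq_zero fun b _ => by rw [hzero b q hq, mul_zero],
          Finset.sum_eq_zero, sub_zero]
        intro m _
        rcases lt_or_ge (m : ℕ) r with hm | hm
        · rw [hLblock x hx q m (Or.inr ⟨hq, hm⟩), zero_mul]
        · rw [hzero a m hm, mul_zero]
    · have hik : i ≠ k := fun e => absurd hk (not_lt.mpr (e ▸ hi))
      rw [covDerivT_lt_le_le (hinv x hx) (hgpd x hx) (hLblock x hx) (hL2y x hx) hk hi hj,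
        h3 x hx k hk i j hi hj, hgblock x hx k j (Or.inl ⟨hk, hj⟩), if_neg hik]
      ring
end
end

section
/- Let L and B be n×n matrices over ℝ and let f be a polynomial with real coefficients. Then the commutator of the directional derivative of f at L in the direction B with L equals the commutator of B with f(L): [ (d/dt)|_{t=0} f(L + tB), L ] = [B, f(L)], where [X,Y] = XY − YX. -/
open Matrix Polynomial

noncomputable section

/-- The entries of `f (L + t • B)` are differentiable in `t`. -/
theorem differentiable_aeval_add_smul_apply {n : ℕ} (L B : Matrix (Fin n) (Fin n) ℝ)
    (f : Polynomial ℝ) (i j : Fin n) :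
    Differentiable ℝ (fun t : ℝ => aeval (L + t • B) f i j) := by
  induction f using Polynomial.induction_on generalizing i j with
  | C a => simp [Algebra.algebraMap_eq_smul_one]
  | add p q hp hq =>
    simpa only [map_add, Matrix.add_apply] using (hp i j).fun_add (hq i j)
  | monomial k a ih =>
    simp only [pow_succ, ← mul_assoc]
    simp only [map_mul _ (_ * _) X, aeval_X, Matrix.mul_apply,
      Matrix.add_apply, Matrix.smul_apply, smul_eq_mul]
    exact Differentiable.fun_sum fun k _ => (ih i k).fun_mul (by fun_prop)

theorem stmt19 {n : ℕ} (L B : Matrix (Fin n) (Fin n) ℝ) (f : Polynomial ℝ)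
    -- `D = (d/dt)|₀ f(L + tB)`, computed entrywise
    (D : Matrix (Fin n) (Fin n) ℝ)
    (hD : ∀ i j, D i j = deriv (fun t : ℝ => aeval (L + t • B) f i j) 0) :
    -- then `[D, L] = [B, f(L)]`
    D * L - L * D = B * aeval L f - aeval L f * B := by
  have hF (i j) : HasDerivAt (fun t : ℝ => aeval (L + t • B) f i j) (D i j) 0 := by
    rw [hD]
    exact (differentiable_aeval_add_smul_apply L B f i j 0).hasDerivAt
  have hM (i j) : HasDerivAt (fun t : ℝ => (L + t • B) i j) (B i j) 0 := by
    simpa using ((hasDerivAt_id (0 : ℝ)).mul_const (B i j)).const_add (L i j)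
  have hcomm (t : ℝ) : aeval (L + t • B) f * (L + t • B) = (L + t • B) * aeval (L + t • B) f := by
    simpa only [map_mul, aeval_X] using congrArg (aeval (L + t • B)) (mul_comm f X)
  have key : D * L + aeval L f * B = B * aeval L f + L * D := by
    ext i j
    have hleft : HasDerivAt (fun t : ℝ => (aeval (L + t • B) f * (L + t • B)) i j)
        ((D * L + aeval L f * B) i j) 0 := by
      simpa only [Matrix.mul_apply, Matrix.add_apply (_ * _), Finset.sum_add_distrib, zero_smul,
        add_zero] using HasDerivAt.fun_sum (u := Finset.univ) fun k _ => (hF i k).fun_mul (hM k j)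
    have hright : HasDerivAt (fun t : ℝ => ((L + t • B) * aeval (L + t • B) f) i j)
        ((B * aeval L f + L * D) i j) 0 := by
      simpa only [Matrix.mul_apply, Matrix.add_apply (_ * _), Finset.sum_add_distrib, zero_smul,
        add_zero] using HasDerivAt.fun_sum (u := Finset.univ) fun k _ => (hM i k).fun_mul (hF k j)
    simp only [hcomm] at hleft
    exact hleft.unique hright
  rw [sub_eq_sub_iff_add_eq_add, key]
end
end
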